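/- Fix c > 0 and define φ_l(t) := tanh(ct)^l · sech(ct) for each integer l ≥ 0 and each t ∈ ℝ. Then: (i) for every l ≥ 0 and every t, φ_l′(t) = c·l·φ_{l−1}(t) − c·(l+1)·φ_{l+1}(t) (where the first term is absent when l = 0); (ii) φ_0(0) = 1 and φ_l(0) = 0 for l ≥ 1; and (iii) for every t, Σ_{l=0}^{∞} φ_l(t)² = Σ_{l=0}^{∞} tanh(ct)^{2l}·sech²(ct) = 1. In other words, the continuous-time quantum walk on the half-line {0, 1, 2, …} with transition rates K_l(t) = c(l+1), started at site 0, has site-occupation probabilities P_l(t) = tanh(ct)^{2l}·sech²(ct). -/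

import Mathlib

/-- The wave function `φ_l(t) = tanh(ct)^l · sech(ct)` of the "optimal" quantum walk. -/
noncomputable def phiOpt (c : ℝ) (l : ℕ) (t : ℝ) : ℝ :=
  Real.tanh (c * t) ^ l / Real.cosh (c * t)

/-!
Writing `T = tanh` and `S = 1 / cosh`, we have `T' = S ^ 2 = 1 - T ^ 2` and `S' = -(T * S)`. Hence
`(T ^ l * S)' = l * T ^ (l - 1) * (1 - T ^ 2) * S - T ^ (l + 1) * S`, which is a combination of the
two neighbouring terms, and `∑ (T ^ l * S) ^ 2` is a geometric series of ratio `T ^ 2` with first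
term `1 - T ^ 2`.
-/

section Hyperbolic

open Real

variable (x : ℝ)

theorem one_div_cosh_sq : (1 / cosh x) ^ 2 = 1 - tanh x ^ 2 := by
  have cosh_ne_zero : cosh x ≠ 0 := (cosh_pos x).ne'
  rw [tanh_eq_sinh_div_cosh]
  field_simp
  exact (cosh_sq_sub_sinh_sq x).symm

theorem hasDerivAt_tanh : HasDerivAt tanh (1 - tanh x ^ 2) x := by
  have cosh_ne_zero : cosh x ≠ 0 := (cosh_pos x).ne'
  have tanh_eq_div : tanh = sinh / cosh := funext tanh_eq_sinh_div_cosh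
  rw [tanh_eq_div]
  refine ((hasDerivAt_sinh x).div (hasDerivAt_cosh x) cosh_ne_zero).congr_deriv ?_
  simp only [Pi.div_apply]
  field_simp

theorem hasDerivAt_one_div_cosh :
    HasDerivAt (fun y ↦ 1 / cosh y) (-(tanh x * (1 / cosh x))) x := by
  have cosh_ne_zero : cosh x ≠ 0 := (cosh_pos x).ne'
  simp only [one_div]
  refine ((hasDerivAt_cosh x).fun_inv cosh_ne_zero).congr_deriv ?_
  rw [tanh_eq_sinh_div_cosh]
  field_simp

theorem hasDerivAt_tanh_pow_div_cosh (l : ℕ) :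
    HasDerivAt (fun y ↦ tanh y ^ l / cosh y)
      (l * (tanh x ^ (l - 1) / cosh x) - (l + 1) * (tanh x ^ (l + 1) / cosh x)) x := by
  simp only [div_eq_mul_one_div (tanh _ ^ _)]
  refine (((hasDerivAt_tanh x).fun_pow l).mul (hasDerivAt_one_div_cosh x)).congr_deriv ?_
  cases l with
  | zero => simp
  | succ n =>
    rw [Nat.add_sub_cancel]
    ring

theorem hasSum_tanh_pow_mul_one_div_cosh_sq :
    HasSum (fun l : ℕ ↦ tanh x ^ (2 * l) * (1 / cosh x) ^ 2) 1 := by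
  have one_sub_tanh_sq_ne_zero : 1 - tanh x ^ 2 ≠ 0 := (sub_pos.2 (tanh_sq_lt_one x)).ne'
  have geometric := (hasSum_geometric_of_lt_one (sq_nonneg (tanh x))
    (tanh_sq_lt_one x)).mul_right (1 - tanh x ^ 2)
  rw [inv_mul_cancel₀ one_sub_tanh_sq_ne_zero] at geometric
  simpa only [pow_mul, one_div_cosh_sq] using geometric

end Hyperbolic

section Walk

variable (c : ℝ) (l : ℕ) (t : ℝ)

theorem hasDerivAt_phiOpt :
    HasDerivAt (phiOpt c l)
      (c * l * phiOpt c (l - 1) t - c * (l + 1) * phiOpt c (l + 1) t) t := by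
  refine ((hasDerivAt_tanh_pow_div_cosh (c * t) l).comp t (hasDerivAt_const_mul c)).congr_deriv ?_
  simp only [phiOpt]
  ring

theorem phiOpt_apply_zero : phiOpt c l 0 = 0 ^ l := by
  simp [phiOpt]

theorem phiOpt_sq :
    phiOpt c l t ^ 2 = Real.tanh (c * t) ^ (2 * l) * (1 / Real.cosh (c * t)) ^ 2 := by
  rw [phiOpt, div_eq_mul_one_div, mul_pow, ← pow_mul, mul_comm l]

theorem hasSum_phiOpt_sq : HasSum (fun l ↦ phiOpt c l t ^ 2) 1 := by
  simpa only [phiOpt_sq] using hasSum_tanh_pow_mul_one_div_cosh_sq (c * t)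

end Walk

/-- The continuous-time quantum walk on the half-line with rates `K_l(t) = c(l+1)`, started at
site 0, is solved by `φ_l(t) = tanh(ct)^l·sech(ct)`: it satisfies the walk ODEs, the initial
condition, stays normalized, and has site-occupation probabilities
`P_l(t) = tanh(ct)^{2l}·sech²(ct)`. -/
theorem optimal_quantum_walk (c : ℝ) (hc : 0 < c) :
    (∀ (l : ℕ) (t : ℝ), HasDerivAt (phiOpt c l)
        (c * l * phiOpt c (l - 1) t - c * (l + 1) * phiOpt c (l + 1) t) t) ∧
    (phiOpt c 0 0 = 1 ∧ ∀ l : ℕ, 1 ≤ l → phiOpt c l 0 = 0) ∧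
    (∀ (l : ℕ) (t : ℝ),
        (phiOpt c l t) ^ 2 = Real.tanh (c * t) ^ (2 * l) * (1 / Real.cosh (c * t)) ^ 2) ∧
    (∀ t : ℝ, ∑' l : ℕ, (phiOpt c l t) ^ 2 = 1) ∧
    (∀ t : ℝ, ∑' l : ℕ, Real.tanh (c * t) ^ (2 * l) * (1 / Real.cosh (c * t)) ^ 2 = 1) :=
  ⟨hasDerivAt_phiOpt c,
    ⟨by rw [phiOpt_apply_zero, pow_zero],
      fun l hl ↦ by rw [phiOpt_apply_zero, zero_pow (Nat.one_le_iff_ne_zero.1 hl)]⟩,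
    phiOpt_sq c,
    fun t ↦ (hasSum_phiOpt_sq c t).tsum_eq,
    fun t ↦ (hasSum_tanh_pow_mul_one_div_cosh_sq (c * t)).tsum_eq⟩
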